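/- Let x be a condensed binary string of length ℓ and let x' be the condensed string of length ℓ + 2 obtained from x by appending the two symbols 1 − x[ℓ] and x[ℓ]. Then for every binary string s with ℓ < |s̃| ≤ ℓ + 2 it holds that dtw(x', s)² ≤ dtw(x, s)². -/

import Mathlib

/-- One step of a warping path: move down, right, or diagonally. -/
def wpStep (a b : ℕ × ℕ) : Prop :=
  (b.1 = a.1 + 1 ∧ b.2 = a.2) ∨ (b.1 = a.1 ∧ b.2 = a.2 + 1) ∨
    (b.1 = a.1 + 1 ∧ b.2 = a.2 + 1)

/-- A warping path of order `m × n` (0-based indices). -/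
def IsWarpingPath (m n : ℕ) (p : List (ℕ × ℕ)) : Prop :=
  p.head? = some (0, 0) ∧ p.getLast? = some (m - 1, n - 1) ∧
    List.Chain' wpStep p ∧ ∀ q ∈ p, q.1 < m ∧ q.2 < n

/-- The cost of aligning binary strings `x` and `y` along path `p`:
the number of aligned mismatching pairs (for binary symbols,
`(x[i] - y[j])^2` is `0` if the symbols agree and `1` otherwise). -/
def pathCost (x y : List Bool) (p : List (ℕ × ℕ)) : ℕ :=
  (p.map fun q => if x.getD q.1 false = y.getD q.2 false then 0 else 1).sum

/-- The squared dynamic time warping distance `dtw(x,y)²` of two binary strings. -/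
noncomputable def dtwSq (x y : List Bool) : ℕ :=
  sInf {c | ∃ p, IsWarpingPath x.length y.length p ∧ pathCost x y p = c}

/-- The dynamic time warping distance `dtw(x,y)`. -/
noncomputable def dtw (x y : List Bool) : ℝ :=
  Real.sqrt (dtwSq x y)

/-- The condensation of a binary string: collapse every maximal run of equal
consecutive symbols to a single symbol. -/
def condense : List Bool → List Bool
  | [] => []
  | [a] => [a]
  | a :: b :: rest => if a = b then condense (b :: rest) else a :: condense (b :: rest)

/-- Auxiliary function collecting the block sizes of a binary string. -/
def blockSizesAux : Bool → ℕ → List Bool → List ℕ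
  | _, cnt, [] => [cnt]
  | cur, cnt, a :: rest =>
      if a = cur then blockSizesAux cur (cnt + 1) rest
      else cnt :: blockSizesAux a 1 rest

/-- The list of block sizes of a binary string (sizes of the maximal runs
of equal consecutive symbols, from left to right). -/
def blockSizes : List Bool → List ℕ
  | [] => []
  | a :: rest => blockSizesAux a 1 rest

/-- The objective `F(z) = Σᵢ dtw(sᵢ, z)²`. -/
noncomputable def Fobj (ss : List (List Bool)) (z : List Bool) : ℕ :=
  (ss.map fun s => dtwSq s z).sum

/-- `z` is a mean of the strings `ss`: a nonempty binary string minimizing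
`F` among all nonempty binary strings. -/
def IsMean (ss : List (List Bool)) (z : List Bool) : Prop :=
  z ≠ [] ∧ ∀ w : List Bool, w ≠ [] → Fobj ss z ≤ Fobj ss w

/-- The optimal value of a Min 1-Separated Sum instance with integers `b`
(1-based indexing) and selection size `r`: minimize the sum of `r` selected
integers, no two of which are consecutive. -/
noncomputable def mssValue (b : List ℕ) (r : ℕ) : ℕ :=
  sInf {s | ∃ I : List ℕ, I.length = r ∧ (∀ i ∈ I, 1 ≤ i ∧ i ≤ b.length) ∧
    List.Chain' (fun a c => a + 2 ≤ c) I ∧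
    (I.map fun i => b.getD (i - 1) 0).sum = s}

/-!
If `x` has fewer symbols than `s` has blocks, then every warping path matches some symbol `a` of `x`
with two consecutive symbols `b ≠ e` of `s`, one of which is `a` and the other `!a`. Hence `!a, a`
can be inserted after that `a` at no cost: the new `!a` is matched with the one of `b`, `e` equal to
it, and the second `a` takes over the rest of the path. When `x` is alternating, the place of the
insertion is irrelevant: the result is always `x` followed by `!x[ℓ], x[ℓ]`.
-/

section Condense

theorem condense_cons_cons_self (b : Bool) (s : List Bool) :
    condense (b :: b :: s) = condense (b :: s) := by
  simp [condense]

theorem length_condense_cons_le (b : Bool) (s : List Bool) :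
    (condense (b :: s)).length ≤ (condense s).length + 1 := by
  cases s with
  | nil => simp [condense]
  | cons e s => rw [condense]; split_ifs <;> simp

theorem ne_nil_of_length_lt_length_condense {n : ℕ} {s : List Bool}
    (h : n < (condense s).length) : s ≠ [] := by
  rintro rfl
  simp [condense] at h

end Condense

section Alternating

variable {a : Bool} {v : List Bool}

theorem cons_append_not_getLastD_getLastD (hc : (a :: v).IsChain (· ≠ ·)) :
    a :: v ++ [!(a :: v).getLastD false, (a :: v).getLastD false] = a :: (!a) :: a :: v := by
  induction v generalizing a with
  | nil => rfl
  | cons b v ih =>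
    obtain ⟨hab, hbv⟩ := List.isChain_cons_cons.1 hc
    obtain rfl : b = !a := Bool.eq_not.2 hab.symm
    simpa using ih hbv

theorem append_cons_append_not_getLastD_getLastD {u : List Bool}
    (hc : (u ++ a :: v).IsChain (· ≠ ·)) :
    u ++ a :: v ++ [!(u ++ a :: v).getLastD false, (u ++ a :: v).getLastD false] =
      u ++ a :: (!a) :: a :: v := by
  have hlast : (u ++ a :: v).getLastD false = (a :: v).getLastD false := by
    simp only [List.getLastD_eq_getLast?, List.getLast?_append_cons]
  rw [hlast, List.append_assoc, cons_append_not_getLastD_getLastD hc.right_of_append]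

end Alternating

section Alignment

/-- The squared difference `(a - b)²` of two binary symbols. -/
def mismatch (a b : Bool) : ℕ := if a = b then 0 else 1

@[simp]
theorem mismatch_self (a : Bool) : mismatch a a = 0 := if_pos rfl

/-- `AlignsWithCost x y c` says that some warping path between `x` and `y` has cost `c`. It replaces
index pairs by a recursion on the two strings: each constructor matches their heads, and its name
tells which way the path goes from there. -/
inductive AlignsWithCost : List Bool → List Bool → ℕ → Prop
  | last (a b : Bool) : AlignsWithCost [a] [b] (mismatch a b)
  | down (a : Bool) {b : Bool} {x y : List Bool} {c : ℕ} (h : AlignsWithCost x (b :: y) c) :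
      AlignsWithCost (a :: x) (b :: y) (mismatch a b + c)
  | right {a : Bool} (b : Bool) {x y : List Bool} {c : ℕ} (h : AlignsWithCost (a :: x) y c) :
      AlignsWithCost (a :: x) (b :: y) (mismatch a b + c)
  | diag (a b : Bool) {x y : List Bool} {c : ℕ} (h : AlignsWithCost x y c) :
      AlignsWithCost (a :: x) (b :: y) (mismatch a b + c)

namespace AlignsWithCost

theorem right_ne_nil {x y : List Bool} {c : ℕ} (h : AlignsWithCost x y c) : y ≠ [] := by
  cases h <;> exact List.cons_ne_nil _ _

theorem exists_of_ne_nil : ∀ {x y : List Bool}, x ≠ [] → y ≠ [] → ∃ c, AlignsWithCost x y c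
  | [a], [b], _, _ => ⟨_, last a b⟩
  | [_], b :: _ :: _, hx, _ =>
    let ⟨_, h⟩ := exists_of_ne_nil hx (List.cons_ne_nil _ _)
    ⟨_, h.right b⟩
  | a :: _ :: _, _ :: _, _, hy =>
    let ⟨_, h⟩ := exists_of_ne_nil (List.cons_ne_nil _ _) hy
    ⟨_, h.down a⟩

theorem insert_of_ne {a b e : Bool} {x s : List Bool} {c : ℕ} (hbe : b ≠ e)
    (h : AlignsWithCost (a :: x) (e :: s) c) :
    AlignsWithCost (a :: (!a) :: a :: x) (b :: e :: s) (mismatch a b + c) := by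
  by_cases hab : b = a
  · obtain rfl : e = !b := Bool.eq_not.2 hbe.symm
    subst hab
    simpa using (h.down (!b)).diag b b
  · obtain rfl : b = !a := Bool.eq_not.2 hab
    simpa using (h.diag (!a) (!a)).down a

theorem exists_insert {x s : List Bool} {c : ℕ} (h : AlignsWithCost x s c)
    (hlt : x.length < (condense s).length) :
    ∃ u a v, x = u ++ a :: v ∧ AlignsWithCost (u ++ a :: (!a) :: a :: v) s c := by
  induction h with
  | last a b => simp [condense] at hlt
  | down a h ih =>
    obtain ⟨u, d, v, rfl, hins⟩ := ih (Nat.lt_of_succ_lt hlt)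
    exact ⟨a :: u, d, v, rfl, hins.down a⟩
  | diag a b h ih =>
    obtain ⟨u, d, v, rfl, hins⟩ :=
      ih (Nat.lt_of_succ_lt_succ (hlt.trans_le (length_condense_cons_le b _)))
    exact ⟨a :: u, d, v, rfl, hins.diag a b⟩
  | @right a b x s c h ih =>
    obtain ⟨e, s, rfl⟩ := List.exists_cons_of_ne_nil h.right_ne_nil
    by_cases hbe : b = e
    · subst hbe
      rw [condense_cons_cons_self] at hlt
      obtain ⟨u, d, v, hx, hins⟩ := ih hlt
      refine ⟨u, d, v, hx, ?_⟩
      cases u <;> obtain ⟨rfl, -⟩ := List.cons_eq_cons.1 hx <;> exact hins.right b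
    · exact ⟨[], a, x, rfl, h.insert_of_ne hbe⟩

theorem append_not_getLastD_getLastD {x s : List Bool} {c : ℕ} (h : AlignsWithCost x s c)
    (hc : x.IsChain (· ≠ ·)) (hlt : x.length < (condense s).length) :
    AlignsWithCost (x ++ [!x.getLastD false, x.getLastD false]) s c := by
  obtain ⟨u, a, v, rfl, hins⟩ := h.exists_insert hlt
  rwa [append_cons_append_not_getLastD_getLastD hc]

end AlignsWithCost

end Alignment

section WarpingPath

/-- A final segment of a warping path of order `m × n`: the conditions of `IsWarpingPath` without
the one on the starting point, so that paths can be treated by recursion. -/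
def IsWarpingTail (m n : ℕ) (p : List (ℕ × ℕ)) : Prop :=
  p.getLast? = some (m - 1, n - 1) ∧ p.IsChain wpStep ∧ ∀ q ∈ p, q.1 < m ∧ q.2 < n

theorem isWarpingTail_singleton {m n i j : ℕ} :
    IsWarpingTail m n [(i, j)] ↔ i + 1 = m ∧ j + 1 = n := by
  simp only [IsWarpingTail, List.getLast?_singleton, Option.some.injEq, Prod.mk.injEq,
    List.isChain_singleton, List.mem_singleton, forall_eq, true_and]
  omega

theorem isWarpingTail_cons_cons {m n i j : ℕ} {r : ℕ × ℕ} {p : List (ℕ × ℕ)} :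
    IsWarpingTail m n ((i, j) :: r :: p) ↔
      (i < m ∧ j < n) ∧ wpStep (i, j) r ∧ IsWarpingTail m n (r :: p) := by
  simp only [IsWarpingTail, List.getLast?_cons_cons, List.isChain_cons_cons,
    List.forall_mem_cons (a := (i, j))]
  tauto

theorem isWarpingPath_iff {m n : ℕ} {p : List (ℕ × ℕ)} :
    IsWarpingPath m n p ↔ ∃ t, p = (0, 0) :: t ∧ IsWarpingTail m n ((0, 0) :: t) := by
  constructor
  · rintro ⟨hhead, htail⟩
    obtain ⟨t, rfl⟩ := List.head?_eq_some_iff.1 hhead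
    exact ⟨t, rfl, htail⟩
  · rintro ⟨t, rfl, htail⟩
    exact ⟨rfl, htail⟩

theorem pathCost_cons (x y : List Bool) (i j : ℕ) (p : List (ℕ × ℕ)) :
    pathCost x y ((i, j) :: p) =
      mismatch (x.getD i false) (y.getD j false) + pathCost x y p := by
  simp [pathCost, mismatch]

theorem drop_eq_cons_iff_getD {α : Type*} {x u : List α} {i : ℕ} {a : α} (d : α) :
    x.drop i = a :: u ↔ i < x.length ∧ x.getD i d = a ∧ x.drop (i + 1) = u := by
  rcases lt_or_ge i x.length with hi | hi
  · simp only [List.drop_eq_getElem_cons hi, List.cons_eq_cons, List.getD_eq_getElem _ _ hi, hi,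
      true_and]
  · simp [List.drop_eq_nil_of_le hi, hi]

theorem drop_eq_getD_cons {α : Type*} {x : List α} {i : ℕ} (hi : i < x.length) (d : α) :
    x.drop i = x.getD i d :: x.drop (i + 1) :=
  (drop_eq_cons_iff_getD d).2 ⟨hi, rfl, rfl⟩

variable {x y : List Bool}

theorem IsWarpingTail.alignsWithCost {p : List (ℕ × ℕ)} {i j : ℕ}
    (h : IsWarpingTail x.length y.length ((i, j) :: p)) :
    AlignsWithCost (x.drop i) (y.drop j) (pathCost x y ((i, j) :: p)) := by
  induction p generalizing i j with
  | nil =>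
    obtain ⟨hi, hj⟩ := isWarpingTail_singleton.1 h
    rw [drop_eq_getD_cons (by omega : i < x.length) false, hi, List.drop_length,
      drop_eq_getD_cons (by omega : j < y.length) false, hj, List.drop_length, pathCost_cons]
    exact .last _ _
  | cons r p ih =>
    obtain ⟨k, l⟩ := r
    obtain ⟨⟨hi, hj⟩, hstep, htail⟩ := isWarpingTail_cons_cons.1 h
    have hrest := ih htail
    have hx := drop_eq_getD_cons hi false
    have hy := drop_eq_getD_cons hj false
    rw [pathCost_cons]
    simp only [wpStep] at hstep
    rcases hstep with ⟨rfl, rfl⟩ | ⟨rfl, rfl⟩ | ⟨rfl, rfl⟩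
    · rw [hy] at hrest ⊢
      exact hx ▸ hrest.down _
    · rw [hx] at hrest ⊢
      exact hy ▸ hrest.right _
    · rw [hx, hy]
      exact hrest.diag _ _

theorem exists_isWarpingTail_cons {i j k l c : ℕ} (hi : i < x.length) (hj : j < y.length)
    (hstep : wpStep (i, j) (k, l))
    (h : ∃ p, IsWarpingTail x.length y.length ((k, l) :: p) ∧ pathCost x y ((k, l) :: p) = c) :
    ∃ p, IsWarpingTail x.length y.length ((i, j) :: p) ∧
      pathCost x y ((i, j) :: p) = mismatch (x.getD i false) (y.getD j false) + c := by
  obtain ⟨p, htail, rfl⟩ := h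
  exact ⟨(k, l) :: p, isWarpingTail_cons_cons.2 ⟨⟨hi, hj⟩, hstep, htail⟩, pathCost_cons ..⟩

theorem AlignsWithCost.exists_isWarpingTail {u v : List Bool} {c : ℕ} (h : AlignsWithCost u v c)
    {i j : ℕ} (hu : x.drop i = u) (hv : y.drop j = v) :
    ∃ p, IsWarpingTail x.length y.length ((i, j) :: p) ∧ pathCost x y ((i, j) :: p) = c := by
  induction h generalizing i j
  all_goals
    obtain ⟨hi, rfl, hu'⟩ := (drop_eq_cons_iff_getD false).1 hu
    obtain ⟨hj, rfl, hv'⟩ := (drop_eq_cons_iff_getD false).1 hv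
  case last =>
    rw [List.drop_eq_nil_iff] at hu' hv'
    exact ⟨[], isWarpingTail_singleton.2 ⟨by omega, by omega⟩, pathCost_cons ..⟩
  case down ih => exact exists_isWarpingTail_cons hi hj (.inl ⟨rfl, rfl⟩) (ih hu' hv)
  case right ih =>
    exact exists_isWarpingTail_cons (l := j + 1) hi hj (.inr (.inl ⟨rfl, rfl⟩)) (ih hu hv')
  case diag ih => exact exists_isWarpingTail_cons hi hj (.inr (.inr ⟨rfl, rfl⟩)) (ih hu' hv')

theorem exists_isWarpingPath_iff_alignsWithCost {c : ℕ} :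
    (∃ p, IsWarpingPath x.length y.length p ∧ pathCost x y p = c) ↔ AlignsWithCost x y c := by
  simp only [isWarpingPath_iff]
  constructor
  · rintro ⟨_, ⟨t, rfl, htail⟩, rfl⟩
    exact htail.alignsWithCost
  · intro h
    obtain ⟨t, htail, hcost⟩ := h.exists_isWarpingTail List.drop_zero List.drop_zero
    exact ⟨_, ⟨t, rfl, htail⟩, hcost⟩

theorem dtwSq_eq_sInf_alignsWithCost (x y : List Bool) :
    dtwSq x y = sInf {c | AlignsWithCost x y c} := by
  simp only [dtwSq, exists_isWarpingPath_iff_alignsWithCost]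

theorem AlignsWithCost.dtwSq_le {c : ℕ} (h : AlignsWithCost x y c) : dtwSq x y ≤ c :=
  dtwSq_eq_sInf_alignsWithCost x y ▸ Nat.sInf_le h

theorem alignsWithCost_dtwSq (hx : x ≠ []) (hy : y ≠ []) : AlignsWithCost x y (dtwSq x y) :=
  dtwSq_eq_sInf_alignsWithCost x y ▸ Nat.sInf_mem (AlignsWithCost.exists_of_ne_nil hx hy)

end WarpingPath

theorem extend_not_increase_dtwSq_general {x s : List Bool} (hx : x ≠ [])
    (hc : x.IsChain (· ≠ ·)) (hlo : x.length < (condense s).length) :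
    dtwSq (x ++ [!x.getLastD false, x.getLastD false]) s ≤ dtwSq x s :=
  have hopt : AlignsWithCost x s (dtwSq x s) :=
    alignsWithCost_dtwSq hx (ne_nil_of_length_lt_length_condense hlo)
  (hopt.append_not_getLastD_getLastD hc hlo).dtwSq_le

/-- extending a condensed string `x` of length `ℓ` by the two
symbols `1 - x[ℓ]`, `x[ℓ]` does not increase the squared dtw distance to any
string `s` with `ℓ < |s̃| ≤ ℓ + 2`. -/
theorem extend_not_increase_dtwSq (x : List Bool) (hx : x ≠ [])
    (hc : List.Chain' (· ≠ ·) x) (s : List Bool) (hs : s ≠ [])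
    (hlo : x.length < (condense s).length)
    (hhi : (condense s).length ≤ x.length + 2) :
    dtwSq (x ++ [!x.getLastD false, x.getLastD false]) s ≤ dtwSq x s :=
  extend_not_increase_dtwSq_general hx hc hlo
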